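/- arXiv:1704.08481 — 3 statements merged into one kernel-verified Lean document; each statement's English description precedes it below -/
import Mathlib

section
/- Define the Klee–Minty outmap φ on the standard n-cube by φ(V) = { j ∈ {1,…,n} : |V ∩ {j, j+1, …, n}| is odd } for all V ⊆ {1,…,n}. Then φ is an odd USO of the full face [∅,{1,…,n}], and for every vertex W ⊆ {1,…,n} and every i ∈ {1,…,n}, φ(W) ∆ φ(W ∆ {i}) = {1,2,…,i}. -/
/-!
If any two distinct vertices `U`, `V` of a face differ in a coordinate in which `φ U` and `φ V`
differ as well, then on every subface with carrier `C` the map `V ↦ φ V ∩ C` is injective, hence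
by counting a bijection onto the subsets of `C`, and the preimage of `∅` is the unique sink.

Parity of cardinality is additive under symmetric difference, so the Klee–Minty outmap satisfies
`φ (U ∆ V) = φ U ∆ φ V`, and a claim about a pair `U`, `V` becomes a claim about `D = U ∆ V`.
For nonempty `D`, the largest element of `D` always belongs to `φ D`, which gives the condition
above; the smallest one belongs to `φ D` exactly when `|D|` is odd, which gives oddness. The flip
formula amounts to `φ {i} = {1,…,i}`.
-/

open Finset
open scoped symmDiff

/-- `V` is a sink of the face `[A,B]` of the standard cube (vertices are subsets
of `{1,…,n}`) under the outmap `φ`: `V` belongs to the face and `φ V` has no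
coordinate in the carrier `B \ A`. -/
def IsSink (φ : Finset ℕ → Finset ℕ) (A B V : Finset ℕ) : Prop :=
  A ⊆ V ∧ V ⊆ B ∧ φ V ∩ (B \ A) = ∅

/-- The face `[A,B]` has exactly one sink under `φ`. -/
def HasUniqueSink (φ : Finset ℕ → Finset ℕ) (A B : Finset ℕ) : Prop :=
  ∃! V, IsSink φ A B V

/-- `φ` is a USO of the face `[A,B]`: every face contained in `[A,B]`
(including `[A,B]` itself) has exactly one sink under `φ`. -/
def IsUSO (φ : Finset ℕ → Finset ℕ) (A B : Finset ℕ) : Prop :=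
  A ⊆ B ∧ ∀ A' B' : Finset ℕ, A ⊆ A' → A' ⊆ B' → B' ⊆ B → HasUniqueSink φ A' B'

/-- `φ` is a PUSO of the face `[A,B]`: `[A,B]` does not have exactly one sink
under `φ`, but every proper face contained in `[A,B]` has exactly one sink. -/
def IsPUSO (φ : Finset ℕ → Finset ℕ) (A B : Finset ℕ) : Prop :=
  A ⊆ B ∧ ¬ HasUniqueSink φ A B ∧
    ∀ A' B' : Finset ℕ, A ⊆ A' → A' ⊆ B' → B' ⊆ B → ¬(A' = A ∧ B' = B) →
      HasUniqueSink φ A' B'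

/-- `φ` is an odd USO of the face `[A,B]`: it is a USO of `[A,B]` and for all
distinct vertices `U, V` of the face, `U ∆ V ⊆ φ U ∆ φ V` implies that
`|U ∆ V|` is odd. -/
def IsOddUSO (φ : Finset ℕ → Finset ℕ) (A B : Finset ℕ) : Prop :=
  IsUSO φ A B ∧
    ∀ U V : Finset ℕ, A ⊆ U → U ⊆ B → A ⊆ V → V ⊆ B → U ≠ V →
      U ∆ V ⊆ φ U ∆ φ V → Odd (U ∆ V).card

/-- The outmap of the Klee–Minty cube:
`φ(V) = {j ∈ {1,…,n} : |V ∩ {j,…,n}| is odd}`. -/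
def kleeMinty (n : ℕ) : Finset ℕ → Finset ℕ :=
  fun V => (Finset.Icc 1 n).filter fun j => Odd (V ∩ Finset.Icc j n).card

section Faces

variable {φ : Finset ℕ → Finset ℕ} {A B : Finset ℕ}

theorem hasUniqueSink_of_injOn (hAB : A ⊆ B)
    (hφ : Set.InjOn (fun V => φ V ∩ (B \ A)) (Set.Icc A B)) : HasUniqueSink φ A B := by
  have hcard : #(B \ A).powerset ≤ #(Icc A B) := by
    rw [card_powerset, card_Icc_finset hAB, card_sdiff_of_subset hAB]
  have hsurj : Set.SurjOn (fun V => φ V ∩ (B \ A)) (Icc A B) (B \ A).powerset :=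
    surjOn_of_injOn_of_card_le _ (fun _ _ => mem_powerset.2 inter_subset_right)
      (by rwa [coe_Icc]) hcard
  obtain ⟨V, hVface, hV⟩ := hsurj (empty_mem_powerset _)
  obtain ⟨hAV, hVB⟩ := mem_Icc.1 hVface
  exact ⟨V, ⟨hAV, hVB, hV⟩, fun U ⟨hAU, hUB, hU⟩ =>
    hφ ⟨hAU, hUB⟩ ⟨hAV, hVB⟩ (hU.trans hV.symm)⟩

/-- One direction of the Szabó–Welzl characterization of unique sink orientations. -/
theorem isUSO_of_pairwise_not_disjoint (hAB : A ⊆ B)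
    (hφ : (Set.Icc A B).Pairwise fun U V => ¬ Disjoint (U ∆ V) (φ U ∆ φ V)) : IsUSO φ A B := by
  refine ⟨hAB, fun A' B' hA hAB' hB => hasUniqueSink_of_injOn hAB' ?_⟩
  rintro U ⟨hAU, hUB⟩ V ⟨hAV, hVB⟩ (hUV : φ U ∩ (B' \ A') = φ V ∩ (B' \ A'))
  have hcarrier : U ∆ V ⊆ B' \ A' :=
    union_subset (sdiff_subset_sdiff hUB hAV) (sdiff_subset_sdiff hVB hAU)
  have hdisj : Disjoint (φ U ∆ φ V) (B' \ A') :=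
    disjoint_iff.2 <| (inf_symmDiff_distrib_right _ _ _).trans (symmDiff_eq_bot.2 hUV)
  by_contra hne
  exact hφ ⟨hA.trans hAU, hUB.trans hB⟩ ⟨hA.trans hAV, hVB.trans hB⟩ hne
    (hdisj.symm.mono_left hcarrier)

end Faces

theorem odd_card_symmDiff_iff {α : Type*} [DecidableEq α] (s t : Finset α) :
    Odd #(s ∆ t) ↔ ¬(Odd #s ↔ Odd #t) := by
  have hst : #(s ∆ t) = #(s \ t) + #(t \ s) := card_union_of_disjoint disjoint_sdiff_sdiff
  have hs : #(s \ t) + #(s ∩ t) = #s := card_sdiff_add_card_inter s t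
  have ht : #(t \ s) + #(s ∩ t) = #t := inter_comm s t ▸ card_sdiff_add_card_inter t s
  grind

section KleeMinty

variable {n : ℕ}

theorem mem_kleeMinty {V : Finset ℕ} {j : ℕ} :
    j ∈ kleeMinty n V ↔ j ∈ Icc 1 n ∧ Odd #(V ∩ Icc j n) :=
  mem_filter

theorem kleeMinty_symmDiff (n : ℕ) (U V : Finset ℕ) :
    kleeMinty n (U ∆ V) = kleeMinty n U ∆ kleeMinty n V := by
  ext j
  have hinter : U ∆ V ∩ Icc j n = (U ∩ Icc j n) ∆ (V ∩ Icc j n) :=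
    inf_symmDiff_distrib_right U V (Icc j n)
  simp only [mem_symmDiff, mem_kleeMinty, hinter, odd_card_symmDiff_iff]
  tauto

theorem kleeMinty_singleton {i : ℕ} (hi : i ≤ n) : kleeMinty n {i} = Icc 1 i := by
  ext j
  have hodd : Odd #({i} ∩ Icc j n) ↔ j ≤ i := by
    by_cases hji : j ≤ i <;> simp [hi, hji]
  rw [mem_kleeMinty, hodd, mem_Icc, mem_Icc]
  omega

theorem max'_mem_kleeMinty {D : Finset ℕ} (hD : D ⊆ Icc 1 n) (hne : D.Nonempty) :
    D.max' hne ∈ kleeMinty n D := by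
  have hmem := D.max'_mem hne
  have htop : D ∩ Icc (D.max' hne) n = {D.max' hne} :=
    eq_singleton_iff_unique_mem.2
      ⟨mem_inter.2 ⟨hmem, left_mem_Icc.2 (mem_Icc.1 (hD hmem)).2⟩, fun x hx =>
        (D.le_max' x (mem_inter.1 hx).1).antisymm (mem_Icc.1 (mem_inter.1 hx).2).1⟩
  exact mem_kleeMinty.2 ⟨hD hmem, by simp [htop]⟩

theorem min'_mem_kleeMinty_iff {D : Finset ℕ} (hD : D ⊆ Icc 1 n) (hne : D.Nonempty) :
    D.min' hne ∈ kleeMinty n D ↔ Odd #D := by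
  have hall : D ∩ Icc (D.min' hne) n = D :=
    inter_eq_left.2 fun x hx => mem_Icc.2 ⟨D.min'_le x hx, (mem_Icc.1 (hD hx)).2⟩
  rw [mem_kleeMinty, hall]
  exact and_iff_right (hD (D.min'_mem hne))

theorem isUSO_kleeMinty (n : ℕ) : IsUSO (kleeMinty n) ∅ (Icc 1 n) := by
  refine isUSO_of_pairwise_not_disjoint (empty_subset _) fun U hU V hV hne => ?_
  have hD : U ∆ V ⊆ Icc 1 n := symmDiff_subset_union.trans (union_subset hU.2 hV.2)
  have hDne : (U ∆ V).Nonempty := symmDiff_nonempty.2 hne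
  simp only [← kleeMinty_symmDiff]
  exact not_disjoint_iff.2 ⟨_, max'_mem _ hDne, max'_mem_kleeMinty hD hDne⟩

theorem isOddUSO_kleeMinty (n : ℕ) : IsOddUSO (kleeMinty n) ∅ (Icc 1 n) := by
  refine ⟨isUSO_kleeMinty n, fun U V _ hU _ hV hne hsub => ?_⟩
  have hD : U ∆ V ⊆ Icc 1 n := symmDiff_subset_union.trans (union_subset hU hV)
  have hDne : (U ∆ V).Nonempty := symmDiff_nonempty.2 hne
  rw [← kleeMinty_symmDiff] at hsub
  exact (min'_mem_kleeMinty_iff hD hDne).1 (hsub (min'_mem _ hDne))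

theorem kleeMinty_symmDiff_kleeMinty_flip (W : Finset ℕ) {i : ℕ} (hi : i ≤ n) :
    kleeMinty n W ∆ kleeMinty n (W ∆ {i}) = Icc 1 i := by
  rw [kleeMinty_symmDiff, symmDiff_symmDiff_cancel_left, kleeMinty_singleton hi]

end KleeMinty

/-- The Klee–Minty cube is an odd USO of the full face of the standard
`n`-cube, and `φ(W) ∆ φ(W ∆ {i}) = {1,…,i}` for every vertex `W` and every
coordinate `i`. -/
theorem klee_minty_odd_uso (n : ℕ) :
    IsOddUSO (kleeMinty n) ∅ (Finset.Icc 1 n) ∧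
      ∀ W : Finset ℕ, W ⊆ Finset.Icc 1 n → ∀ i ∈ Finset.Icc 1 n,
        kleeMinty n W ∆ kleeMinty n (W ∆ {i}) = Finset.Icc 1 i :=
  ⟨isOddUSO_kleeMinty n, fun W _ _ hi => kleeMinty_symmDiff_kleeMinty_flip W (mem_Icc.1 hi).2⟩
end

section
/- Let φ be an outmap that is an odd USO of the full face [∅,{1,…,n}] of the standard n-cube, and let W ⊆ {1,…,n} be a vertex satisfying φ(W) ∆ φ(W ∆ {i}) = {1,2,…,i} for all i ∈ {1,…,n}. Define the outmap φ' obtained by complementing W: φ'(W) = φ(W) ∆ {1,…,n}; φ'(W ∆ {i}) = φ(W ∆ {i}) ∆ {i} for each i ∈ {1,…,n}; and φ'(V) = φ(V) for all other vertices V. Then φ' is an odd USO of the full face [∅,{1,…,n}] as well. -/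
open Finset
open scoped symmDiff

/-!
Replacing `φ` by `V ↦ φ (W ∆ V) ∆ φ W`, we may assume that `W = ∅` and that `φ W = ∅`, so that
`φ {i} = {1,…,i}`. By the Szabó–Welzl criterion, being an odd USO is a condition on pairs of
distinct vertices `U, V`, and only the pairs with `|U| ≤ 1` are affected by complementing `∅`.
Let `|V| ≥ 2`.

* If `V ⊆ φ V`, then `φ {max V}` and `φ V` agree on `{max V} ∆ V`, violating the criterion.
  Hence `V ⊈ φ V`, and `V` meets `φ V`, so that the same holds for the complement of `φ V`. This
  settles the pair `(∅, V)` of `φ'`.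
* Since `φ {i}` only changes in direction `i`, the pair `({i}, V)` is not affected if `i ∈ V`.
  If `i ∉ V`, let `j` be the predecessor of `i` in `V`: on `V`, the sets `φ' {i}` and `φ {j}`
  coincide, while the distances of `{i}` and `{j}` from `V` differ by two. If there is no
  predecessor, then `φ' {i}` misses `V` and the pair behaves like the pair `(∅, V)` of `φ`.
-/

section SzaboWelzl

variable {φ : Finset ℕ → Finset ℕ} {A B V : Finset ℕ} {r : ℕ}

lemma isSink_iff :
    IsSink φ A B V ↔ A ⊆ V ∧ V ⊆ B ∧ ∀ x ∈ B, x ∉ A → x ∉ φ V := by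
  simp only [IsSink, eq_empty_iff_forall_notMem, mem_inter, mem_sdiff]
  grind

lemma isSink_symmDiff_singleton_of_notMem (hr : r ∉ B \ A) :
    IsSink (fun V ↦ φ V ∆ {r}) A B V ↔ IsSink φ A B V := by
  simp only [isSink_iff]
  grind [mem_symmDiff]

lemma isSink_iff_isSink_facet (hA : r ∉ A) (hB : r ∈ B) :
    IsSink φ A B V ↔
      r ∉ φ V ∧ (IsSink φ A (B.erase r) V ∨ IsSink φ (insert r A) B V) := by
  simp only [isSink_iff]
  grind

lemma existsUnique_and_eq_or_eq_iff_xor {α : Type*} {p : α → Prop} {a b : α} (hab : a ≠ b) :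
    (∃! x, p x ∧ (x = a ∨ x = b)) ↔ Xor (p a) (p b) := by
  simp only [Xor, ExistsUnique]
  grind

lemma HasUniqueSink.isSink_iff_eq {S : Finset ℕ} (h : HasUniqueSink φ A B)
    (hS : IsSink φ A B S) : IsSink φ A B V ↔ V = S :=
  ⟨fun hV ↦ h.unique hV hS, fun hV ↦ hV ▸ hS⟩

lemma IsUSO.symmDiff_singleton (h : IsUSO φ A B) (r : ℕ) :
    IsUSO (fun V ↦ φ V ∆ {r}) A B := by
  refine ⟨h.1, fun A' B' hA hAB hB ↦ ?_⟩
  by_cases hr : r ∈ B' \ A'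
  · obtain ⟨hrB, hrA⟩ := mem_sdiff.1 hr
    -- Of the sinks of the two facets orthogonal to `r`, one is the sink of the face for `φ`, and
    -- the other one is the sink after reversing direction `r`.
    have hlower : HasUniqueSink φ A' (B'.erase r) :=
      h.2 _ _ hA (subset_erase.2 ⟨hAB, hrA⟩) ((erase_subset _ _).trans hB)
    have hupper : HasUniqueSink φ (insert r A') B' :=
      h.2 _ _ (hA.trans (subset_insert _ _)) (insert_subset hrB hAB) hB
    obtain ⟨S, hS⟩ := hlower.exists
    obtain ⟨T, hT⟩ := hupper.exists
    have hST : S ≠ T := by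
      rintro rfl
      exact notMem_erase r B' (hS.2.1 (hT.1 (mem_insert_self r A')))
    have hφ : Xor (r ∉ φ S) (r ∉ φ T) := by
      simpa only [HasUniqueSink, isSink_iff_isSink_facet hrA hrB, hlower.isSink_iff_eq hS,
        hupper.isSink_iff_eq hT, existsUnique_and_eq_or_eq_iff_xor hST] using h.2 A' B' hA hAB hB
    have hlower' : r ∉ B'.erase r \ A' := by simp
    have hupper' : r ∉ B' \ insert r A' := by simp
    simp only [HasUniqueSink, isSink_iff_isSink_facet hrA hrB,
      isSink_symmDiff_singleton_of_notMem hlower', isSink_symmDiff_singleton_of_notMem hupper',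
      hlower.isSink_iff_eq hS, hupper.isSink_iff_eq hT, existsUnique_and_eq_or_eq_iff_xor hST]
    grind [Xor, mem_symmDiff]
  · simpa only [HasUniqueSink, isSink_symmDiff_singleton_of_notMem hr] using h.2 A' B' hA hAB hB

lemma IsUSO.symmDiff_const (h : IsUSO φ A B) (R : Finset ℕ) :
    IsUSO (fun V ↦ φ V ∆ R) A B := by
  induction R using Finset.induction_on with
  | empty => simpa only [← bot_eq_empty, symmDiff_bot] using h
  | insert r R hr ih =>
    have hRr : insert r R = R ∆ {r} := by
      rw [symmDiff_eq_union (disjoint_singleton_right.2 hr), union_singleton]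
    simpa only [hRr, symmDiff_assoc] using ih.symmDiff_singleton r

lemma IsUSO.pairwise_not_disjoint (h : IsUSO φ A B) :
    (Set.Icc A B).Pairwise fun U V ↦ ¬Disjoint (U ∆ V) (φ U ∆ φ V) := by
  intro U hU V hV hUV hdisj
  rw [disjoint_left] at hdisj
  -- After reversing the directions in `φ U`, both `U` and `V` are sinks of the face they span.
  have hface : HasUniqueSink (fun V ↦ φ V ∆ φ U) (U ∩ V) (U ∪ V) :=
    (h.symmDiff_const (φ U)).2 _ _ (subset_inter hU.1 hV.1)
      (inter_subset_left.trans subset_union_left) (union_subset hU.2 hV.2)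
  have hsinkU : IsSink (fun V ↦ φ V ∆ φ U) (U ∩ V) (U ∪ V) U :=
    isSink_iff.2 ⟨inter_subset_left, subset_union_left, by simp⟩
  have hsinkV : IsSink (fun V ↦ φ V ∆ φ U) (U ∩ V) (U ∪ V) V :=
    isSink_iff.2 ⟨inter_subset_right, subset_union_right, by grind [mem_symmDiff]⟩
  exact hUV (hface.unique hsinkU hsinkV)

lemma hasUniqueSink_of_pairwise_not_disjoint (hAB : A ⊆ B)
    (h : (Set.Icc A B).Pairwise fun U V ↦ ¬Disjoint (U ∆ V) (φ U ∆ φ V)) :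
    HasUniqueSink φ A B := by
  have hinj : Set.InjOn (fun V ↦ φ V ∩ (B \ A)) (Set.Icc A B) := by
    rintro U ⟨hAU, hUB⟩ V ⟨hAV, hVB⟩ hUV
    by_contra hne
    refine h ⟨hAU, hUB⟩ ⟨hAV, hVB⟩ hne (disjoint_left.2 fun x hx ↦ ?_)
    have hxφ := Finset.ext_iff.1 hUV x
    grind [mem_symmDiff]
  rw [← coe_Icc] at hinj
  -- `V ↦ φ V ∩ (B \ A)` is injective between sets of equal size; the sink is the preimage of `∅`.
  have hsurj : Set.SurjOn (fun V ↦ φ V ∩ (B \ A)) (Icc A B : Finset (Finset ℕ))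
      ((B \ A).powerset : Finset (Finset ℕ)) := by
    refine surjOn_of_injOn_of_card_le _ (fun V _ ↦ by simp) hinj ?_
    rw [card_Icc_finset hAB, card_powerset, card_sdiff_of_subset hAB]
  obtain ⟨S, hS, hSsink⟩ := hsurj (show ∅ ∈ _ by simp)
  have hSAB := mem_Icc.1 hS
  exact ⟨S, ⟨hSAB.1, hSAB.2, hSsink⟩, fun T hT ↦
    hinj (mem_Icc.2 ⟨hT.1, hT.2.1⟩) hS (hT.2.2.trans hSsink.symm)⟩

/-- The Szabó–Welzl criterion. -/
theorem isUSO_iff_pairwise_not_disjoint :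
    IsUSO φ A B ↔
      A ⊆ B ∧ (Set.Icc A B).Pairwise fun U V ↦ ¬Disjoint (U ∆ V) (φ U ∆ φ V) :=
  ⟨fun h ↦ ⟨h.1, h.pairwise_not_disjoint⟩, fun ⟨hAB, h⟩ ↦ ⟨hAB, fun _ _ hA hAB' hB ↦
    hasUniqueSink_of_pairwise_not_disjoint hAB' (h.mono (Set.Icc_subset_Icc hA hB))⟩⟩

end SzaboWelzl

/-- The condition that a pair of distinct vertices `U, V` of an odd USO `φ` satisfies, in terms of
`D = U ∆ V` and `Y = φ U ∆ φ V`: the Szabó–Welzl criterion together with the parity condition. -/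
def OddlyMeets (D Y : Finset ℕ) : Prop :=
  ¬Disjoint D Y ∧ (D ⊆ Y → Odd #D)

lemma oddlyMeets_congr {D Y Y' : Finset ℕ} (h : ∀ x ∈ D, x ∈ Y ↔ x ∈ Y') :
    OddlyMeets D Y ↔ OddlyMeets D Y' := by
  simp only [OddlyMeets, disjoint_left, subset_iff]
  grind

lemma isOddUSO_iff_pairwise_oddlyMeets {φ : Finset ℕ → Finset ℕ} {A B : Finset ℕ} :
    IsOddUSO φ A B ↔
      A ⊆ B ∧ (Set.Icc A B).Pairwise fun U V ↦ OddlyMeets (U ∆ V) (φ U ∆ φ V) := by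
  rw [IsOddUSO, isUSO_iff_pairwise_not_disjoint, and_assoc]
  simp only [OddlyMeets, Set.Pairwise, Set.mem_Icc]
  grind

lemma isOddUSO_iff_isOddUSO_translate {φ : Finset ℕ → Finset ℕ} {A B W : Finset ℕ}
    (hAW : A ⊆ W) (hWB : W ⊆ B) (R : Finset ℕ) :
    IsOddUSO φ A B ↔ IsOddUSO (fun V ↦ φ (W ∆ V) ∆ R) ∅ (B \ A) := by
  have himage : Set.Icc A B = (W ∆ ·) '' Set.Icc ∅ (B \ A) := by
    have hmem (V : Finset ℕ) : W ∆ V ∈ Set.Icc A B ↔ V ∈ Set.Icc ∅ (B \ A) := by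
      simp only [Set.mem_Icc, subset_iff, mem_symmDiff, mem_sdiff]
      grind
    ext V
    rw [(symmDiff_right_involutive W).image_eq_preimage_symm, Set.mem_preimage, ← hmem,
      symmDiff_symmDiff_cancel_left]
  have hdiff (U V : Finset ℕ) : (U ∆ R) ∆ (V ∆ R) = U ∆ V := by
    rw [symmDiff_symmDiff_symmDiff_comm, symmDiff_self, symmDiff_bot]
  have hdiff' (U V : Finset ℕ) : (W ∆ U) ∆ (W ∆ V) = U ∆ V := by
    rw [symmDiff_symmDiff_symmDiff_comm, symmDiff_self, bot_symmDiff]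
  rw [isOddUSO_iff_pairwise_oddlyMeets, isOddUSO_iff_pairwise_oddlyMeets, himage,
    (symmDiff_right_injective W).injOn.pairwise_image]
  simp only [Set.Pairwise, Function.onFun, hdiff, hdiff', hAW.trans hWB, empty_subset, true_and]

section ComplementEmpty

variable {ψ ψ' : Finset ℕ → Finset ℕ} {N V : Finset ℕ} {i j : ℕ}

lemma IsOddUSO.oddlyMeets_erase (hψ : IsOddUSO ψ ∅ N) (hVN : V ⊆ N) (hV : V.Nontrivial)
    (hj : j ∈ V) : OddlyMeets (V.erase j) (ψ {j} ∆ ψ V) := by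
  have hjV : ({j} : Finset ℕ) ∆ V = V.erase j := by
    rw [symmDiff_of_le (singleton_subset_iff.2 hj), sdiff_singleton_eq_erase]
  rw [← hjV]
  exact (isOddUSO_iff_pairwise_oddlyMeets.1 hψ).2 ⟨empty_subset _, by grind⟩
    ⟨empty_subset _, hVN⟩ hV.ne_singleton.symm

lemma IsOddUSO.not_subset_outmap (hψ : IsOddUSO ψ ∅ N)
    (hsing : ∀ i ∈ N, ∀ x ∈ N, x ∈ ψ {i} ↔ x ≤ i) (hVN : V ⊆ N) (hV : V.Nontrivial) :
    ¬V ⊆ ψ V := by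
  have hmax := max'_mem V hV.nonempty
  obtain ⟨x, hx, hxψ⟩ := not_disjoint_iff.1 (hψ.oddlyMeets_erase hVN hV hmax).1
  have hxV := mem_of_mem_erase hx
  have hxmax : x ∈ ψ {V.max' hV.nonempty} :=
    (hsing _ (hVN hmax) x (hVN hxV)).2 (le_max' V x hxV)
  exact fun hsub ↦ by grind [mem_symmDiff]

lemma IsOddUSO.not_disjoint_outmap (hψ : IsOddUSO ψ ∅ N) (hempty : ψ ∅ = ∅) (hVN : V ⊆ N)
    (hV : V.Nonempty) : ¬Disjoint V (ψ V) := by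
  have hpair : OddlyMeets (∅ ∆ V) (ψ ∅ ∆ ψ V) := (isOddUSO_iff_pairwise_oddlyMeets.1 hψ).2
    ⟨Subset.rfl, empty_subset _⟩ ⟨empty_subset _, hVN⟩ hV.ne_empty.symm
  rw [hempty, ← bot_eq_empty, bot_symmDiff, bot_symmDiff] at hpair
  exact hpair.1

lemma IsOddUSO.oddlyMeets_symmDiff_outmap (hψ : IsOddUSO ψ ∅ N) (hempty : ψ ∅ = ∅)
    (hsing : ∀ i ∈ N, ∀ x ∈ N, x ∈ ψ {i} ↔ x ≤ i) (hVN : V ⊆ N) (hV : V.Nontrivial) :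
    OddlyMeets V (N ∆ ψ V) := by
  obtain ⟨x, hxV, hxψ⟩ := not_subset.1 (hψ.not_subset_outmap hsing hVN hV)
  obtain ⟨y, hyV, hyψ⟩ := not_disjoint_iff.1 (hψ.not_disjoint_outmap hempty hVN hV.nonempty)
  have hxN : x ∈ N ∆ ψ V := mem_symmDiff.2 (.inl ⟨hVN hxV, hxψ⟩)
  have hyN : y ∉ N ∆ ψ V := by grind [mem_symmDiff]
  exact ⟨not_disjoint_iff.2 ⟨x, hxV, hxN⟩, fun hsub ↦ absurd (hsub hyV) hyN⟩

lemma IsOddUSO.oddlyMeets_erase_Iio (hψ : IsOddUSO ψ ∅ N)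
    (hsing : ∀ i ∈ N, ∀ x ∈ N, x ∈ ψ {i} ↔ x ≤ i) (hVN : V ⊆ N) (hV : V.Nontrivial)
    (hi : i ∈ V) : OddlyMeets (V.erase i) (Iio i ∆ ψ V) := by
  refine (oddlyMeets_congr fun x hx ↦ ?_).1 (hψ.oddlyMeets_erase hVN hV hi)
  have hxi := hsing i (hVN hi) x (hVN (mem_of_mem_erase hx))
  grind [mem_symmDiff]

lemma IsOddUSO.oddlyMeets_insert_Iio_of_pred (hψ : IsOddUSO ψ ∅ N)
    (hsing : ∀ i ∈ N, ∀ x ∈ N, x ∈ ψ {i} ↔ x ≤ i) (hVN : V ⊆ N) (hV : V.Nontrivial)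
    (hi : i ∉ V) (hj : j ∈ V) (hij : ∀ x ∈ V, x ≤ j ↔ x < i) :
    OddlyMeets (insert i V) (Iio i ∆ ψ V) := by
  have hagree (x) (hx : x ∈ V) : x ∈ ψ {j} ∆ ψ V ↔ x ∈ Iio i ∆ ψ V := by
    rw [mem_symmDiff, mem_symmDiff, hsing j (hVN hj) x (hVN hx), mem_Iio, hij x hx]
  have hpair : OddlyMeets (V.erase j) (Iio i ∆ ψ V) :=
    (oddlyMeets_congr fun x hx ↦ hagree x (mem_of_mem_erase hx)).1 (hψ.oddlyMeets_erase hVN hV hj)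
  have hsub : V.erase j ⊆ insert i V := (erase_subset j V).trans (subset_insert i V)
  refine ⟨fun hdisj ↦ hpair.1 (hdisj.mono_left hsub), fun h ↦ ?_⟩
  have hodd : Odd #(V.erase j) := hpair.2 (hsub.trans h)
  rw [card_insert_of_notMem hi, ← card_erase_add_one hj]
  exact hodd.add_one.add_one

lemma IsOddUSO.oddlyMeets_insert_Iio_of_forall_lt (hψ : IsOddUSO ψ ∅ N) (hempty : ψ ∅ = ∅)
    (hsing : ∀ i ∈ N, ∀ x ∈ N, x ∈ ψ {i} ↔ x ≤ i) (hVN : V ⊆ N) (hV : V.Nontrivial)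
    (hi : ∀ x ∈ V, i < x) : OddlyMeets (insert i V) (Iio i ∆ ψ V) := by
  have hagree (x) (hx : x ∈ V) : x ∈ Iio i ∆ ψ V ↔ x ∈ ψ V := by
    have hix := hi x hx
    grind [mem_symmDiff]
  constructor
  · obtain ⟨x, hxV, hxψ⟩ := not_disjoint_iff.1 (hψ.not_disjoint_outmap hempty hVN hV.nonempty)
    exact not_disjoint_iff.2 ⟨x, mem_insert_of_mem hxV, (hagree x hxV).2 hxψ⟩
  · intro hsub
    refine absurd (fun x hx ↦ ?_) (hψ.not_subset_outmap hsing hVN hV)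
    exact (hagree x hx).1 (hsub (mem_insert_of_mem hx))

lemma IsOddUSO.oddlyMeets_singleton_symmDiff_Iio (hψ : IsOddUSO ψ ∅ N) (hempty : ψ ∅ = ∅)
    (hsing : ∀ i ∈ N, ∀ x ∈ N, x ∈ ψ {i} ↔ x ≤ i) (hVN : V ⊆ N) (hV : V.Nontrivial) (i : ℕ) :
    OddlyMeets ({i} ∆ V) (Iio i ∆ ψ V) := by
  by_cases hi : i ∈ V
  · rw [symmDiff_of_le (singleton_subset_iff.2 hi), sdiff_singleton_eq_erase]
    exact hψ.oddlyMeets_erase_Iio hsing hVN hV hi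
  rw [symmDiff_eq_union (disjoint_singleton_left.2 hi), singleton_union]
  rcases {x ∈ V | x < i}.eq_empty_or_nonempty with hlt | hlt
  · refine hψ.oddlyMeets_insert_Iio_of_forall_lt hempty hsing hVN hV fun x hx ↦ ?_
    exact (not_lt.1 (filter_eq_empty_iff.1 hlt hx)).lt_of_ne fun h ↦ hi (h ▸ hx)
  · obtain ⟨hjV, hji⟩ := mem_filter.1 (max'_mem _ hlt)
    refine hψ.oddlyMeets_insert_Iio_of_pred hsing hVN hV hi hjV fun x hx ↦ ?_
    exact ⟨fun hxj ↦ hxj.trans_lt hji, fun hxi ↦ le_max' _ x (mem_filter.2 ⟨hx, hxi⟩)⟩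

lemma oddlyMeets_singleton_symmDiff_singleton (hψ' : ∀ i ∈ N, ∀ x ∈ N, x ∈ ψ' {i} ↔ x < i)
    (hi : i ∈ N) (hj : j ∈ N) (hij : i ≠ j) : OddlyMeets ({i} ∆ {j}) (ψ' {i} ∆ ψ' {j}) := by
  wlog hlt : i < j generalizing i j
  · rw [symmDiff_comm ({i} : Finset ℕ), symmDiff_comm (ψ' {i})]
    exact this hj hi hij.symm (hij.lt_or_gt.resolve_left hlt)
  have hmem (x) (hx : x ∈ N) : x ∈ ψ' {i} ∆ ψ' {j} ↔ i ≤ x ∧ x < j := by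
    rw [mem_symmDiff, hψ' i hi x hx, hψ' j hj x hx]
    lia
  have hiψ : i ∈ ψ' {i} ∆ ψ' {j} := (hmem i hi).2 ⟨le_rfl, hlt⟩
  have hjψ : j ∉ ψ' {i} ∆ ψ' {j} := fun h ↦ ((hmem j hj).1 h).2.false
  rw [symmDiff_eq_union (disjoint_singleton.2 hij)]
  exact ⟨not_disjoint_iff.2 ⟨i, by simp, hiψ⟩, fun hsub ↦ absurd (hsub (by simp)) hjψ⟩

theorem IsOddUSO.complement_empty (hψ : IsOddUSO ψ ∅ N) (hempty : ψ ∅ = ∅)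
    (hsing : ∀ i ∈ N, ∀ x ∈ N, x ∈ ψ {i} ↔ x ≤ i) (hempty' : ψ' ∅ = N)
    (hsing' : ∀ i ∈ N, ψ' {i} = ψ {i} ∆ {i})
    (hnontrivial' : ∀ V, V.Nontrivial → ψ' V = ψ V) : IsOddUSO ψ' ∅ N := by
  have hlt (i) (hi : i ∈ N) (x) (hx : x ∈ N) : x ∈ ψ' {i} ↔ x < i := by
    rw [hsing' i hi, mem_symmDiff, hsing i hi x hx, mem_singleton]
    lia
  have hcenter_nbr (i) (hi : i ∈ N) : OddlyMeets {i} (N ∆ ψ' {i}) := by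
    have hiψ : i ∈ N ∆ ψ' {i} := mem_symmDiff.2 (.inl ⟨hi, by simp [hlt i hi i hi]⟩)
    exact ⟨not_disjoint_iff.2 ⟨i, mem_singleton_self i, hiψ⟩, fun _ ↦ by simp⟩
  have hnbr_far (i) (hi : i ∈ N) (V) (hVN : V ⊆ N) (hV : V.Nontrivial) :
      OddlyMeets ({i} ∆ V) (ψ' {i} ∆ ψ V) := by
    refine (oddlyMeets_congr fun x hx ↦ ?_).1
      (hψ.oddlyMeets_singleton_symmDiff_Iio hempty hsing hVN hV i)
    have hxN : x ∈ N := by grind [mem_symmDiff]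
    rw [mem_symmDiff, mem_symmDiff, hlt i hi x hxN, mem_Iio]
  refine isOddUSO_iff_pairwise_oddlyMeets.2 ⟨empty_subset _, fun U hU V hV hUV ↦ ?_⟩
  wlog hcard : #U ≤ #V generalizing U V
  · rw [symmDiff_comm U, symmDiff_comm (ψ' U)]
    exact this V hV U hU hUV.symm (le_of_not_ge hcard)
  rcases U.eq_empty_or_nonempty with rfl | hUne
  · rw [hempty', ← bot_eq_empty, bot_symmDiff]
    obtain ⟨i, rfl⟩ | hVnt := (nonempty_iff_ne_empty.2 hUV.symm).exists_eq_singleton_or_nontrivial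
    · exact hcenter_nbr i (singleton_subset_iff.1 hV.2)
    · rw [hnontrivial' V hVnt]
      exact hψ.oddlyMeets_symmDiff_outmap hempty hsing hV.2 hVnt
  obtain ⟨i, rfl⟩ | hUnt := hUne.exists_eq_singleton_or_nontrivial
  · have hi := singleton_subset_iff.1 hU.2
    have hVne : V.Nonempty := card_pos.1 (hUne.card_pos.trans_le hcard)
    obtain ⟨j, rfl⟩ | hVnt := hVne.exists_eq_singleton_or_nontrivial
    · exact oddlyMeets_singleton_symmDiff_singleton hlt hi (singleton_subset_iff.1 hV.2)
        fun hij ↦ hUV (congrArg _ hij)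
    · rw [hnontrivial' V hVnt]
      exact hnbr_far i hi V hV.2 hVnt
  · have hVnt : V.Nontrivial :=
      one_lt_card_iff_nontrivial.1 ((one_lt_card_iff_nontrivial.2 hUnt).trans_le hcard)
    rw [hnontrivial' U hUnt, hnontrivial' V hVnt]
    exact (isOddUSO_iff_pairwise_oddlyMeets.1 hψ).2 hU hV hUV

end ComplementEmpty

theorem complement_vertex_odd_uso_general {φ φ' : Finset ℕ → Finset ℕ} {A B W : Finset ℕ}
    (hφ : IsOddUSO φ A B) (hAW : A ⊆ W) (hWB : W ⊆ B)
    (hWout : ∀ i ∈ B \ A, ∀ x ∈ B \ A, x ∈ φ W ∆ φ (W ∆ {i}) ↔ x ≤ i)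
    (hφ'W : φ' W = φ W ∆ (B \ A))
    (hφ'nbr : ∀ i ∈ B \ A, φ' (W ∆ {i}) = φ (W ∆ {i}) ∆ {i})
    (hφ'other : ∀ V, V ≠ W → (∀ i ∈ B \ A, V ≠ W ∆ {i}) → φ' V = φ V) :
    IsOddUSO φ' A B := by
  rw [isOddUSO_iff_isOddUSO_translate hAW hWB (φ W)] at hφ ⊢
  have hW : W ∆ ∅ = W := symmDiff_bot W
  refine hφ.complement_empty ?_ (fun i hi x hx ↦ ?_) ?_ (fun i hi ↦ ?_) (fun V hV ↦ ?_)
  · rw [hW, symmDiff_self, bot_eq_empty]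
  · rw [symmDiff_comm, hWout i hi x hx]
  · rw [hW, hφ'W, symmDiff_symmDiff_self']
  · rw [hφ'nbr i hi, symmDiff_right_comm]
  · have hVW : W ∆ V ≠ W := by
      rw [ne_eq, symmDiff_eq_left]
      exact hV.nonempty.ne_empty
    rw [hφ'other _ hVW fun i _ ↦ (symmDiff_right_injective W).ne hV.ne_singleton]

/-- Complementing a vertex `W` of an odd USO that satisfies
`φ(W) ∆ φ(W ∆ {i}) = {1,…,i}` for all coordinates `i` yields again an odd USO. -/
theorem complement_vertex_odd_uso (n : ℕ) (φ φ' : Finset ℕ → Finset ℕ)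
    (hφ : IsOddUSO φ ∅ (Finset.Icc 1 n))
    (W : Finset ℕ) (hW : W ⊆ Finset.Icc 1 n)
    (hWout : ∀ i ∈ Finset.Icc 1 n, φ W ∆ φ (W ∆ {i}) = Finset.Icc 1 i)
    (hφ'W : φ' W = φ W ∆ Finset.Icc 1 n)
    (hφ'nbr : ∀ i ∈ Finset.Icc 1 n, φ' (W ∆ {i}) = φ (W ∆ {i}) ∆ {i})
    (hφ'other : ∀ V : Finset ℕ, V ≠ W → (∀ i ∈ Finset.Icc 1 n, V ≠ W ∆ {i}) →
      φ' V = φ V) :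
    IsOddUSO φ' ∅ (Finset.Icc 1 n) := by
  refine complement_vertex_odd_uso_general hφ (empty_subset W) hW (fun i hi x hx ↦ ?_)
    (by rwa [sdiff_empty]) (by rwa [sdiff_empty]) (by rwa [sdiff_empty])
  rw [sdiff_empty] at hi hx
  rw [hWout i hi, mem_Icc, and_iff_right (mem_Icc.1 hx).1]
end

section
/- For every n ≥ 2, puso(n) ≤ 2^(2^(n−1)), where puso(n) is the number of outmaps φ mapping subsets of {1,…,n} to subsets of {1,…,n} that are PUSOs of the full face [∅,{1,…,n}] of the standard n-cube. -/
open Finset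
open scoped symmDiff

/-- The set of outmaps of the standard `n`-cube (normalized: mapping subsets of
`{1,…,n}` to subsets of `{1,…,n}` and `∅` elsewhere) that are PUSOs of the full
face `[∅,{1,…,n}]`. -/
def PUSOOutmaps (n : ℕ) : Set (Finset ℕ → Finset ℕ) :=
  {φ | (∀ V : Finset ℕ, V ⊆ Finset.Icc 1 n → φ V ⊆ Finset.Icc 1 n) ∧
       (∀ V : Finset ℕ, ¬ V ⊆ Finset.Icc 1 n → φ V = ∅) ∧
       IsPUSO φ ∅ (Finset.Icc 1 n)}

/-- `puso n`: the number of outmaps of the standard `n`-cube that are PUSOs of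
the full face. -/
noncomputable def pusoCount (n : ℕ) : ℕ := (PUSOOutmaps n).ncard

/-!
Fix a face `[A,B]` and let `N X` be the number of its vertices at which `φ`, restricted to the
carrier, equals `X`. For `i ∉ X`, the sum `N X + N (X ∪ {i})` counts the vertices with value `X`
outside coordinate `i`, and these are distributed over the two facets orthogonal to `i`. On a USO
this gives `N = 1`, so `φ` is a bijection. On a PUSO it gives `N X + N (X ∪ {i}) = 2`, so
`N X - 1 = (-1) ^ #X * (N ∅ - 1)` and `N` takes only the values `0` and `2`: all values of `φ` have
the same parity and antipodal vertices have the same value. For distinct, non-antipodal `U`, `V`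
the set `φ U ∆ φ V` therefore has even size, meets `U ∆ V`, and is not contained in it.

Consequently the inverse `ψ` of `φ` on the facet `[∅,M]`, where `M` omits one coordinate, makes
every 2-face a bow. If two such maps agree on bit `j < i`, then agreement on bit `i` at `X` is not
affected by toggling `i` or `j` in `X`. Hence `ψ` is determined by the `2 ^ #M - 1` bits
`min S ∈ ψ S` for nonempty `S ⊆ M`. The common parity of the values restores the omitted coordinate,
and antipodality restores the opposite facet, so `2 ^ #M` bits determine `φ`.
-/

section Parity

variable {α : Type*} [DecidableEq α] {s t : Finset α} {a : α}

lemma even_card_symmDiff : Even #(s ∆ t) ↔ (Even #s ↔ Even #t) := by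
  have hs := card_sdiff_add_card_inter s t
  have ht := card_sdiff_add_card_inter t s
  have hst : #(s ∆ t) = #(s \ t) + #(t \ s) := card_union_of_disjoint disjoint_sdiff_sdiff
  rw [inter_comm] at ht
  grind

lemma eq_of_erase_eq_of_even_card_iff (h : s.erase a = t.erase a)
    (heven : Even #s ↔ Even #t) : s = t := by
  have hsub : s ∆ t ⊆ {a} := fun x hx => by
    have := Finset.ext_iff.1 h x
    grind [mem_symmDiff]
  have hne : s ∆ t ≠ {a} := fun he => by simpa [he] using even_card_symmDiff.2 heven
  exact symmDiff_eq_bot.1 ((subset_singleton_iff.1 hsub).resolve_right hne)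

end Parity

section Outmap

variable {φ : Finset ℕ → Finset ℕ} {A B A' B' U V X : Finset ℕ} {i b : ℕ}

/-- The number of vertices of the face `[A,B]` at which `φ`, restricted to the carrier `B \ A`,
takes the value `X`; the sinks are the case `X = ∅`. -/
def faceCount (φ : Finset ℕ → Finset ℕ) (A B X : Finset ℕ) : ℕ :=
  #{V ∈ Finset.Icc A B | φ V ∩ (B \ A) = X}

lemma faceCount_empty_eq_one_iff : faceCount φ A B ∅ = 1 ↔ HasUniqueSink φ A B := by
  simp only [faceCount, HasUniqueSink, IsSink, card_eq_one_iff_existsUnique, mem_filter,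
    Finset.mem_Icc, and_assoc]

lemma faceCount_pos (hV : V ∈ Finset.Icc A B) : 0 < faceCount φ A B (φ V ∩ (B \ A)) :=
  card_pos.2 ⟨V, mem_filter.2 ⟨hV, rfl⟩⟩

lemma faceCount_add_faceCount_insert_eq_card (hi : i ∈ B \ A) (hiX : i ∉ X) :
    faceCount φ A B X + faceCount φ A B (insert i X) =
      #{V ∈ Finset.Icc A B | φ V ∩ (B \ A).erase i = X} := by
  rw [← card_filter_add_card_filter_not (fun V => i ∉ φ V), filter_filter, filter_filter,
    faceCount, faceCount]
  have hnotMem (V : Finset ℕ) :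
      φ V ∩ (B \ A) = X ↔ φ V ∩ (B \ A).erase i = X ∧ i ∉ φ V := by
    simp only [Finset.ext_iff, mem_inter, mem_erase]
    grind
  have hmem (V : Finset ℕ) :
      φ V ∩ (B \ A) = insert i X ↔ φ V ∩ (B \ A).erase i = X ∧ ¬ i ∉ φ V := by
    simp only [Finset.ext_iff, mem_inter, mem_erase, mem_insert]
    grind
  simp only [hnotMem, hmem, and_comm]

lemma faceCount_erase_add_faceCount_insert_eq_card :
    faceCount φ A (B.erase i) X + faceCount φ (insert i A) B X =
      #{V ∈ Finset.Icc A B | φ V ∩ (B \ A).erase i = X} := by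
  have hlower : Finset.Icc A (B.erase i) = {V ∈ Finset.Icc A B | i ∉ V} := by
    ext V; simp only [Finset.mem_Icc, mem_filter, subset_erase, and_assoc]
  have hupper : Finset.Icc (insert i A) B = {V ∈ Finset.Icc A B | ¬ i ∉ V} := by
    ext V; simp only [Finset.mem_Icc, mem_filter, insert_subset_iff]; tauto
  rw [← card_filter_add_card_filter_not (fun V => i ∉ V), faceCount, faceCount, hlower, hupper,
    erase_sdiff_comm, sdiff_insert, filter_comm, filter_comm (fun V => ¬ i ∉ V)]

lemma IsUSO.mono (h : IsUSO φ A B) (hA : A ⊆ A') (hAB : A' ⊆ B') (hB : B' ⊆ B) :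
    IsUSO φ A' B' :=
  ⟨hAB, fun _ _ hA' hAB' hB' => h.2 _ _ (hA.trans hA') hAB' (hB'.trans hB)⟩

lemma IsUSO.faceCount_eq_one (h : IsUSO φ A B) (hX : X ⊆ B \ A) : faceCount φ A B X = 1 := by
  induction X using Finset.induction_on generalizing A B with
  | empty => exact faceCount_empty_eq_one_iff.2 (h.2 _ _ subset_rfl h.1 subset_rfl)
  | insert i X hiX ih =>
    obtain ⟨hi, hXC⟩ := insert_subset_iff.1 hX
    have hAB := h.1
    have hface := ih h hXC
    have hlower := ih (h.mono subset_rfl (B' := B.erase i) (by grind) (by grind)) (by grind)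
    have hupper := ih (h.mono (A' := insert i A) (by grind) (by grind) subset_rfl) (by grind)
    have hsplit := (faceCount_add_faceCount_insert_eq_card (φ := φ) hi hiX).trans
      (faceCount_erase_add_faceCount_insert_eq_card).symm
    omega

lemma IsUSO.bijOn (h : IsUSO φ A B) :
    Set.BijOn (fun V => φ V ∩ (B \ A)) (Set.Icc A B) (Set.Iic (B \ A)) := by
  refine ⟨fun V _ => inter_subset_right, fun U hU V hV hUV => ?_, fun X hX => ?_⟩
  · have hcount := h.faceCount_eq_one (inter_subset_right (s₁ := φ V))
    exact card_le_one.1 hcount.le _ (mem_filter.2 ⟨Finset.mem_Icc.2 hU, hUV⟩) _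
      (mem_filter.2 ⟨Finset.mem_Icc.2 hV, rfl⟩)
  · obtain ⟨V, hV⟩ := card_pos.1 (h.faceCount_eq_one hX).ge
    exact ⟨V, Finset.mem_Icc.1 (mem_filter.1 hV).1, (mem_filter.1 hV).2⟩

lemma IsUSO.symmDiff_inter_symmDiff_nonempty (h : IsUSO φ (U ∩ V) (U ∪ V)) (hne : U ≠ V) :
    ((U ∆ V) ∩ (φ U ∆ φ V)).Nonempty := by
  by_contra hempty
  refine hne (h.bijOn.injOn ⟨inter_subset_left, subset_union_left⟩
    ⟨inter_subset_right, subset_union_right⟩ (Finset.ext fun i => ?_))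
  have hi : i ∉ (U ∆ V) ∩ (φ U ∆ φ V) := fun hi => hempty ⟨i, hi⟩
  grind [mem_symmDiff]

namespace IsPUSO

lemma isUSO (h : IsPUSO φ A B) (hA : A ⊆ A') (hAB : A' ⊆ B') (hB : B' ⊆ B)
    (hne : ¬(A' = A ∧ B' = B)) : IsUSO φ A' B' := by
  refine ⟨hAB, fun A'' B'' hA' hAB' hB' => h.2.2 _ _ (hA.trans hA') hAB' (hB'.trans hB) ?_⟩
  rintro ⟨rfl, rfl⟩
  exact hne ⟨hA'.antisymm hA, hB.antisymm hB'⟩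

lemma isUSO_erase (h : IsPUSO φ A B) (hi : i ∈ B \ A) : IsUSO φ A (B.erase i) :=
  h.isUSO subset_rfl (subset_erase.2 ⟨h.1, by grind⟩) (erase_subset _ _) (by grind)

lemma isUSO_insert (h : IsPUSO φ A B) (hi : i ∈ B \ A) : IsUSO φ (insert i A) B :=
  h.isUSO (subset_insert _ _) (insert_subset (by grind) h.1) subset_rfl (by grind)

lemma carrier_nonempty (h : IsPUSO φ A B) : (B \ A).Nonempty := by
  by_contra hempty
  rw [not_nonempty_iff_eq_empty, sdiff_eq_empty_iff_subset] at hempty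
  obtain rfl := h.1.antisymm hempty
  exact h.2.1 ⟨A, by simp [IsSink], fun V hV => hV.2.1.antisymm hV.1⟩

lemma faceCount_add_faceCount_insert_eq_two (h : IsPUSO φ A B) (hX : X ⊆ B \ A) (hi : i ∈ B \ A)
    (hiX : i ∉ X) : faceCount φ A B X + faceCount φ A B (insert i X) = 2 := by
  rw [faceCount_add_faceCount_insert_eq_card hi hiX, ← faceCount_erase_add_faceCount_insert_eq_card,
    (h.isUSO_erase hi).faceCount_eq_one (by grind),
    (h.isUSO_insert hi).faceCount_eq_one (by grind)]

lemma faceCount_sub_one (h : IsPUSO φ A B) (hX : X ⊆ B \ A) :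
    (faceCount φ A B X - 1 : ℤ) = (-1) ^ #X * (faceCount φ A B ∅ - 1) := by
  induction X using Finset.induction_on with
  | empty => simp
  | insert i X hiX ih =>
    obtain ⟨hi, hXC⟩ := insert_subset_iff.1 hX
    have hsum := h.faceCount_add_faceCount_insert_eq_two hXC hi hiX
    rw [card_insert_of_notMem hiX, pow_succ', mul_assoc, ← ih hXC]
    omega

lemma faceCount_eq_two (h : IsPUSO φ A B) (hX : X ⊆ B \ A) (hpos : 0 < faceCount φ A B X) :
    faceCount φ A B X = 2 := by
  obtain ⟨i, hi⟩ := h.carrier_nonempty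
  have hsum := h.faceCount_add_faceCount_insert_eq_two (empty_subset _) hi (notMem_empty i)
  have hsink : faceCount φ A B ∅ ≠ 1 := mt faceCount_empty_eq_one_iff.1 h.2.1
  have hsign := h.faceCount_sub_one hX
  rcases neg_one_pow_eq_or ℤ #X with hpow | hpow <;> rw [hpow] at hsign <;> omega

lemma even_card_iff (h : IsPUSO φ A B) (hV : V ∈ Finset.Icc A B) :
    Even #(φ V ∩ (B \ A)) ↔ faceCount φ A B ∅ = 2 := by
  have hsign := h.faceCount_sub_one (inter_subset_right (s₁ := φ V))
  rw [h.faceCount_eq_two inter_subset_right (faceCount_pos hV)] at hsign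
  rcases (#(φ V ∩ (B \ A))).even_or_odd with heven | hodd
  · rw [heven.neg_one_pow] at hsign
    exact iff_of_true heven (by omega)
  · rw [hodd.neg_one_pow] at hsign
    exact iff_of_false (Nat.not_even_iff_odd.2 hodd) (by omega)

lemma even_card_inter_symmDiff (h : IsPUSO φ A B) (hU : U ∈ Finset.Icc A B)
    (hV : V ∈ Finset.Icc A B) : Even #((B \ A) ∩ (φ U ∆ φ V)) := by
  have hdistrib : (B \ A) ∩ (φ U ∆ φ V) = (φ U ∩ (B \ A)) ∆ (φ V ∩ (B \ A)) := by
    grind [mem_symmDiff]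
  rw [hdistrib, even_card_symmDiff, h.even_card_iff hU, h.even_card_iff hV]

lemma symmDiff_inter_symmDiff_nonempty (h : IsPUSO φ A B) (hU : U ∈ Finset.Icc A B)
    (hV : V ∈ Finset.Icc A B) (hne : U ≠ V) (hanti : V ≠ U ∆ (B \ A)) :
    ((U ∆ V) ∩ (φ U ∆ φ V)).Nonempty := by
  rw [Finset.mem_Icc] at hU hV
  refine (h.isUSO (subset_inter hU.1 hV.1) inter_subset_union (union_subset hU.2 hV.2)
    ?_).symmDiff_inter_symmDiff_nonempty hne
  rintro ⟨hinter, hunion⟩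
  refine hanti ?_
  rw [← hinter, ← hunion, ← sup_eq_union, ← inf_eq_inter, ← symmDiff_eq_sup_sdiff_inf,
    symmDiff_symmDiff_cancel_left]

lemma apply_antipode (h : IsPUSO φ A B) (hV : V ∈ Finset.Icc A B) :
    φ (V ∆ (B \ A)) ∩ (B \ A) = φ V ∩ (B \ A) := by
  have hcount := h.faceCount_eq_two inter_subset_right (faceCount_pos hV)
  obtain ⟨W, hW, hWV⟩ := exists_mem_ne (Nat.lt_of_lt_of_eq one_lt_two hcount.symm) V
  obtain ⟨hWB, hvalue⟩ := mem_filter.1 hW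
  by_cases hanti : W = V ∆ (B \ A)
  · rwa [← hanti]
  · obtain ⟨i, hi⟩ := h.symmDiff_inter_symmDiff_nonempty hV hWB hWV.symm hanti
    have := Finset.ext_iff.1 hvalue i
    grind [mem_symmDiff]

lemma symmDiff_sdiff_symmDiff_nonempty (h : IsPUSO φ A B) (hU : U ∈ Finset.Icc A B)
    (hV : V ∈ Finset.Icc A B) (hne : U ≠ V) (hanti : V ≠ U ∆ (B \ A)) :
    (((B \ A) ∩ (φ U ∆ φ V)) \ (U ∆ V)).Nonempty := by
  -- `U` and the antipode of `V` are separated exactly by the coordinates outside `U ∆ V`.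
  obtain ⟨i, hi⟩ := h.symmDiff_inter_symmDiff_nonempty hU (V := V ∆ (B \ A))
    (by grind [mem_symmDiff]) (fun he => hanti (by rw [he, symmDiff_symmDiff_cancel_right]))
    (fun he => hne (symmDiff_left_injective _ he).symm)
  have := Finset.ext_iff.1 (h.apply_antipode hV) i
  exact ⟨i, by grind [mem_symmDiff]⟩

lemma card_inter_symmDiff_eq_one (h : IsPUSO φ A B) (hb : b ∈ B \ A)
    (hU : U ∈ Finset.Icc A (B.erase b)) (hV : V ∈ Finset.Icc A (B.erase b)) (hne : U ≠ V)
    (hcard : #((B \ A).erase b ∩ (φ U ∆ φ V)) ≤ 2) :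
    #(((B \ A).erase b ∩ (φ U ∆ φ V)) ∩ (U ∆ V)) = 1 := by
  have hUB : U ∈ Finset.Icc A B := Finset.Icc_subset_Icc_right (erase_subset b B) hU
  have hVB : V ∈ Finset.Icc A B := Finset.Icc_subset_Icc_right (erase_subset b B) hV
  have hanti : V ≠ U ∆ (B \ A) := by
    rintro rfl
    grind [mem_symmDiff]
  obtain ⟨i, hi⟩ := h.symmDiff_inter_symmDiff_nonempty hUB hVB hne hanti
  refine le_antisymm (not_lt.1 fun hlt => ?_) (card_pos.2 ⟨i, by grind [mem_symmDiff]⟩)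
  obtain ⟨x, hx⟩ := h.symmDiff_sdiff_symmDiff_nonempty hUB hVB hne hanti
  have hsub : ((B \ A).erase b ∩ (φ U ∆ φ V)) ∩ (U ∆ V) = (B \ A).erase b ∩ (φ U ∆ φ V) :=
    eq_of_subset_of_card_le inter_subset_left (by omega)
  -- Otherwise exactly two coordinates other than `b` change, so by parity `b` does not change.
  have hparity : (B \ A) ∩ (φ U ∆ φ V) = (B \ A).erase b ∩ (φ U ∆ φ V) := by
    refine eq_of_erase_eq_of_even_card_iff (a := b) (by grind)
      (iff_of_true (h.even_card_inter_symmDiff hUB hVB) ?_)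
    rw [hsub] at hlt
    rw [le_antisymm hcard hlt]
    exact even_two
  rw [hparity, ← hsub] at hx
  grind

end IsPUSO

/-- The map `ψ` orients each edge of the cube `[∅,M]` consistently and makes each 2-face a bow:
two vertices at distance 1 or 2 disagree on exactly one of the coordinates separating them. -/
def IsBowOutmap (M : Finset ℕ) (ψ : Finset ℕ → Finset ℕ) : Prop :=
  ∀ X ⊆ M, ∀ Y ⊆ M, X ≠ Y → #(X ∆ Y) ≤ 2 → #((X ∆ Y) ∩ (ψ X ∆ ψ Y)) = 1

namespace IsBowOutmap

variable {M Y : Finset ℕ} {ψ ψ' : Finset ℕ → Finset ℕ}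

lemma agree_iff_agree (h : IsBowOutmap M ψ) (h' : IsBowOutmap M ψ') (hX : X ⊆ M) (hY : Y ⊆ M)
    (hcard : #(X ∆ Y) ≤ 2) (hi : i ∈ X ∆ Y)
    (hagree : ∀ j ∈ X ∆ Y, j ≠ i → (j ∈ ψ X ↔ j ∈ ψ' X) ∧ (j ∈ ψ Y ↔ j ∈ ψ' Y)) :
    (i ∈ ψ X ↔ i ∈ ψ' X) ↔ (i ∈ ψ Y ↔ i ∈ ψ' Y) := by
  have hne : X ≠ Y := by
    rintro rfl
    simp at hi
  have heq : (X ∆ Y) ∩ (ψ X ∆ ψ Y) = (X ∆ Y) ∩ (ψ' X ∆ ψ' Y) := by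
    refine eq_of_erase_eq_of_even_card_iff (a := i) (Finset.ext fun j => ?_) ?_
    · have := hagree j
      grind [mem_symmDiff]
    · rw [h X hX Y hY hne hcard, h' X hX Y hY hne hcard]
  have := Finset.ext_iff.1 heq i
  grind [mem_symmDiff]

lemma mem_iff_mem_of_forall_isLeast (h : IsBowOutmap M ψ) (h' : IsBowOutmap M ψ')
    (hmin : ∀ S ⊆ M, ∀ i, IsLeast (S : Set ℕ) i → (i ∈ ψ S ↔ i ∈ ψ' S))
    (hi : i ∈ M) (hX : X ⊆ M) : i ∈ ψ X ↔ i ∈ ψ' X := by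
  induction i using Nat.strong_induction_on generalizing X with
  | _ i ihi =>
  have hedge {Y : Finset ℕ} (hY : Y ⊆ M) :
      (i ∈ ψ Y ↔ i ∈ ψ' Y) ↔ (i ∈ ψ (Y ∆ {i}) ↔ i ∈ ψ' (Y ∆ {i})) :=
    h.agree_iff_agree h' hY (by grind [mem_symmDiff]) (by simp) (by simp) (by simp)
  induction X using Finset.strongInduction with
  | _ X ihX =>
  by_cases hlow : ∃ j ∈ X, j < i
  · obtain ⟨j, hjX, hji⟩ := hlow
    have hdist : (X ∆ {i}) ∆ X.erase j = {i, j} := by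
      ext x
      grind [mem_symmDiff]
    -- Bit `j` already agrees by induction, so agreement of bit `i` crosses the `{i, j}`-diagonal.
    have hsquare := h.agree_iff_agree h' (X := X ∆ {i}) (Y := X.erase j) (i := i)
      (by grind [mem_symmDiff]) (by grind) (by rw [hdist]; exact card_le_two)
      (by simp [hdist]) (by
        rw [hdist]
        intro k hk hki
        obtain rfl : k = j := by grind
        exact ⟨ihi k hji (hX hjX) (by grind [mem_symmDiff]), ihi k hji (hX hjX) (by grind)⟩)
    exact (hedge hX).2 (hsquare.2 (ihX _ (erase_ssubset hjX) (by grind)))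
  · push Not at hlow
    by_cases hiX : i ∈ X
    · exact hmin X hX i ⟨hiX, hlow⟩
    · exact (hedge hX).2 (hmin _ (by grind [mem_symmDiff]) i
        ⟨by grind [mem_symmDiff], fun j hj => by grind [mem_symmDiff]⟩)

end IsBowOutmap

/-- The inverse of `φ`, restricted to the coordinates in `M`, as an outmap of the cube `[∅,M]`;
it is meaningful on subsets of `M` when `φ` is a USO of `[∅,M]`. -/
noncomputable def outmapInverse (M : Finset ℕ) (φ : Finset ℕ → Finset ℕ) : Finset ℕ → Finset ℕ :=
  Function.invFunOn (fun V => φ V ∩ M) (Set.Iic M)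

namespace IsUSO

variable {M : Finset ℕ}

lemma bijOn_cube (h : IsUSO φ ∅ M) :
    Set.BijOn (fun V => φ V ∩ M) (Set.Iic M) (Set.Iic M) := by
  simpa only [← bot_eq_empty, sdiff_bot, Set.Icc_bot] using h.bijOn

lemma invOn_outmapInverse (h : IsUSO φ ∅ M) :
    Set.InvOn (outmapInverse M φ) (fun V => φ V ∩ M) (Set.Iic M) (Set.Iic M) :=
  h.bijOn_cube.invOn_invFunOn

lemma mapsTo_outmapInverse (h : IsUSO φ ∅ M) :
    Set.MapsTo (outmapInverse M φ) (Set.Iic M) (Set.Iic M) :=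
  h.bijOn_cube.surjOn.mapsTo_invFunOn

end IsUSO

lemma IsPUSO.isBowOutmap_outmapInverse (h : IsPUSO φ ∅ B) (hb : b ∈ B) :
    IsBowOutmap (B.erase b) (outmapInverse (B.erase b) φ) := by
  intro X hX Y hY hne hcard
  have hbC : b ∈ B \ ∅ := by simpa using hb
  have hfacet := h.isUSO_erase hbC
  have hU := hfacet.mapsTo_outmapInverse hX
  have hV := hfacet.mapsTo_outmapInverse hY
  have hφU := hfacet.invOn_outmapInverse.2 hX
  have hφV := hfacet.invOn_outmapInverse.2 hY
  set U := outmapInverse (B.erase b) φ X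
  set V := outmapInverse (B.erase b) φ Y
  have hdiff : (B \ ∅).erase b ∩ (φ U ∆ φ V) = X ∆ Y := by
    rw [← hφU, ← hφV]
    grind [mem_symmDiff]
  have hUV : U ≠ V := fun he => hne (by rw [← hφU, ← hφV, he])
  rw [← hdiff] at hcard ⊢
  exact h.card_inter_symmDiff_eq_one hbC (Finset.mem_Icc.2 ⟨empty_subset U, hU⟩)
    (Finset.mem_Icc.2 ⟨empty_subset V, hV⟩) hUV hcard

/-- The bits `min S ∈ ψ S`, for `S ⊆ B \ {b}` nonempty and `ψ` the inverse of `φ` on the facet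
`[∅, B \ {b}]`, recorded as the set of those `S` whose bit is `1`; since `∅` has no minimum, its
bit is free to record the parity of the outmap values. -/
def pusoCode (B : Finset ℕ) (b : ℕ) (φ : Finset ℕ → Finset ℕ) : Set (Finset ℕ) :=
  {S | S ⊆ B.erase b ∧
    ((∃ i, IsLeast (S : Set ℕ) i ∧ i ∈ outmapInverse (B.erase b) φ S) ∨
      (S = ∅ ∧ Even #(φ ∅ ∩ B)))}

lemma mem_pusoCode_iff_of_isLeast {S : Finset ℕ} (hS : S ⊆ B.erase b)
    (hi : IsLeast (S : Set ℕ) i) :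
    S ∈ pusoCode B b φ ↔ i ∈ outmapInverse (B.erase b) φ S := by
  have hne : S ≠ ∅ := ne_empty_of_mem hi.1
  simp only [pusoCode, Set.mem_ofPred_eq, hS, hne, true_and, false_and, or_false]
  exact ⟨fun ⟨j, hj, hmem⟩ => hj.unique hi ▸ hmem, fun hmem => ⟨i, hi, hmem⟩⟩

lemma empty_mem_pusoCode_iff : ∅ ∈ pusoCode B b φ ↔ Even #(φ ∅ ∩ B) := by
  simp [pusoCode, IsLeast]

namespace IsPUSO

variable {φ' : Finset ℕ → Finset ℕ}

lemma eqOn_outmapInverse_of_pusoCode_eq (h : IsPUSO φ ∅ B) (h' : IsPUSO φ' ∅ B) (hb : b ∈ B)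
    (hcode : pusoCode B b φ = pusoCode B b φ') :
    Set.EqOn (outmapInverse (B.erase b) φ) (outmapInverse (B.erase b) φ')
      (Set.Iic (B.erase b)) := by
  intro X hX
  have hbC : b ∈ B \ ∅ := by simpa using hb
  have hsub := (h.isUSO_erase hbC).mapsTo_outmapInverse hX
  have hsub' := (h'.isUSO_erase hbC).mapsTo_outmapInverse hX
  ext i
  by_cases hi : i ∈ B.erase b
  · refine (h.isBowOutmap_outmapInverse hb).mem_iff_mem_of_forall_isLeast
      (h'.isBowOutmap_outmapInverse hb) (fun S hS j hj => ?_) hi hX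
    rw [← mem_pusoCode_iff_of_isLeast hS hj, hcode, mem_pusoCode_iff_of_isLeast hS hj]
  · exact iff_of_false (fun hmem => hi (hsub hmem)) (fun hmem => hi (hsub' hmem))

lemma inter_eq_inter_of_pusoCode_eq_of_subset_erase (h : IsPUSO φ ∅ B)
    (h' : IsPUSO φ' ∅ B) (hb : b ∈ B) (hcode : pusoCode B b φ = pusoCode B b φ')
    (hU : U ⊆ B.erase b) : φ U ∩ B = φ' U ∩ B := by
  have hbC : b ∈ B \ ∅ := by simpa using hb
  have hX : φ U ∩ B.erase b ⊆ B.erase b := inter_subset_right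
  have hinv := (h.isUSO_erase hbC).invOn_outmapInverse.1 hU
  have hinv' := (h'.isUSO_erase hbC).invOn_outmapInverse.2 hX
  have hfacet : φ U ∩ B.erase b = φ' U ∩ B.erase b := by
    simpa only [← h.eqOn_outmapInverse_of_pusoCode_eq h' hb hcode hX, hinv] using hinv'.symm
  have hparity : Even #(φ U ∩ B) ↔ Even #(φ' U ∩ B) := by
    have hUB : U ∈ Finset.Icc ∅ B := by grind
    have h0B : ∅ ∈ Finset.Icc ∅ B := by simp
    have hU0 := (h.even_card_iff hUB).trans (h.even_card_iff h0B).symm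
    have hU0' := (h'.even_card_iff hUB).trans (h'.even_card_iff h0B).symm
    rw [sdiff_empty] at hU0 hU0'
    rw [hU0, hU0', ← empty_mem_pusoCode_iff (b := b), hcode, empty_mem_pusoCode_iff]
  refine eq_of_erase_eq_of_even_card_iff (a := b) ?_ hparity
  rwa [← inter_erase, ← inter_erase]

lemma inter_eq_inter_of_pusoCode_eq (h : IsPUSO φ ∅ B) (h' : IsPUSO φ' ∅ B) (hb : b ∈ B)
    (hcode : pusoCode B b φ = pusoCode B b φ') (hV : V ⊆ B) : φ V ∩ B = φ' V ∩ B := by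
  by_cases hbV : b ∈ V
  · have hVB : V ∈ Finset.Icc ∅ B := by grind
    have hanti := h.apply_antipode hVB
    have hanti' := h'.apply_antipode hVB
    rw [sdiff_empty] at hanti hanti'
    rw [← hanti, ← hanti']
    exact h.inter_eq_inter_of_pusoCode_eq_of_subset_erase h' hb hcode (by grind [mem_symmDiff])
  · exact h.inter_eq_inter_of_pusoCode_eq_of_subset_erase h' hb hcode (subset_erase.2 ⟨hV, hbV⟩)

end IsPUSO

lemma injOn_pusoCode {n : ℕ} (hb : b ∈ Finset.Icc 1 n) :
    Set.InjOn (pusoCode (Finset.Icc 1 n) b) (PUSOOutmaps n) := by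
  rintro φ ⟨hφ, hφ0, h⟩ φ' ⟨hφ', hφ0', h'⟩ hcode
  funext V
  by_cases hV : V ⊆ Finset.Icc 1 n
  · rw [← inter_eq_left.2 (hφ V hV), ← inter_eq_left.2 (hφ' V hV)]
    exact h.inter_eq_inter_of_pusoCode_eq h' hb hcode hV
  · rw [hφ0 V hV, hφ0' V hV]

end Outmap

/-- Upper bound on the number of PUSOs: `puso(n) ≤ 2^(2^(n-1))` for `n ≥ 2`. -/
theorem puso_upper_bound (n : ℕ) (hn : 2 ≤ n) :
    pusoCount n ≤ 2 ^ 2 ^ (n - 1) := by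
  have hn1 : n ∈ Finset.Icc 1 n := Finset.mem_Icc.2 ⟨by omega, le_rfl⟩
  calc pusoCount n
      ≤ (𝒫 (((Finset.Icc 1 n).erase n).powerset : Set (Finset ℕ))).ncard :=
        Set.ncard_le_ncard_of_injOn (pusoCode (Finset.Icc 1 n) n)
          (fun φ _ S hS => mem_coe.2 (mem_powerset.2 hS.1)) (injOn_pusoCode hn1)
          (finite_toSet _).powerset
    _ = 2 ^ 2 ^ (n - 1) := by
        rw [Set.ncard_powerset _ (finite_toSet _), Set.ncard_coe_finset, card_powerset,
          card_erase_of_mem hn1, Nat.card_Icc, Nat.add_sub_cancel]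
end
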